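/- For every partial recursive function f : ℕ →. ℕ (with values in Part ℕ) there exists a partial recursive function g : ℕ →. ℕ that is a middle inverse of f, i.e. for every a : ℕ one has (f a).bind (fun b => (g b).bind f) = f a (the composite partial map f ∘ g ∘ f equals f). -/

import Mathlib

/-!
Enumerate the graph of `f` and let `g b` be the first `a` to appear with `b ∈ f a`. This search
halts whenever `b` is in the range of `f`, and then `f (g b) = b`; applying this to the values
`b = f a` gives `f ∘ g ∘ f = f`. Running the enumeration in stages avoids getting stuck on an
argument at which `f` diverges.
-/

variable {α β : Type*}

/-- `g` uniformizes the relation `R` if it selects an element of each nonempty section of `R`.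
The selection is a partial function, undefined exactly where the section is empty. -/
structure IsUniformization (R : α → β → Prop) (g : α →. β) : Prop where
  rel_of_mem : ∀ {a b}, b ∈ g a → R a b
  dom_of_rel : ∀ {a b}, R a b → (g a).Dom

theorem IsUniformization.bind_bind_eq {f : α →. β} {g : β →. α}
    (hg : IsUniformization (fun b a => b ∈ f a) g) (a : α) :
    ((f a).bind fun b => (g b).bind f) = f a := by
  have bind_eq_some {b : β} (hb : b ∈ f a) : (g b).bind f = Part.some b := by
    have hx : (g b).get (hg.dom_of_rel hb) ∈ g b := Part.get_mem _
    exact Part.eq_some_iff.2 (Part.mem_bind hx (hg.rel_of_mem hx))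
  ext y
  rw [Part.mem_bind_iff]
  constructor
  · rintro ⟨b, hb, hy⟩
    rw [bind_eq_some hb, Part.mem_some_iff] at hy
    exact hy ▸ hb
  · intro hy
    exact ⟨y, hy, bind_eq_some hy ▸ Part.mem_some y⟩

variable [Primcodable α] [Primcodable β]

theorem exists_primrec₂_stages {f : α →. β} (hf : Partrec f) :
    ∃ F : α → ℕ → Option β, Primrec₂ F ∧ ∀ a b, b ∈ f a ↔ ∃ k, b ∈ F a k := by
  obtain ⟨c, hc⟩ := Nat.Partrec.Code.exists_code.1 hf
  have eval_encode (a : α) : c.eval (Encodable.encode a) = (f a).map Encodable.encode := by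
    simp [hc]
  refine ⟨fun a k => (c.evaln k (Encodable.encode a)).bind Encodable.decode, ?_, fun a b => ?_⟩
  · have evaln_primrec : Primrec₂ fun (a : α) (k : ℕ) => c.evaln k (Encodable.encode a) :=
      Nat.Partrec.Code.primrec_evaln.comp
        ((Primrec.snd.pair (Primrec.const c)).pair (Primrec.encode.comp Primrec.fst))
    exact Primrec.option_bind evaln_primrec (Primrec.decode.comp Primrec.snd)
  · constructor
    · intro hb
      have hcode : Encodable.encode b ∈ c.eval (Encodable.encode a) :=
        eval_encode a ▸ Part.mem_map _ hb
      obtain ⟨k, hk⟩ := Nat.Partrec.Code.evaln_complete.1 hcode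
      exact ⟨k, Option.mem_bind_iff.2 ⟨_, hk, Encodable.encodek b⟩⟩
    · rintro ⟨k, hk⟩
      obtain ⟨n, hn, hdecode⟩ := Option.mem_bind_iff.1 hk
      have hcode : n ∈ (f a).map Encodable.encode :=
        eval_encode a ▸ Nat.Partrec.Code.evaln_sound hn
      obtain ⟨y, hy, rfl⟩ := (Part.mem_map_iff _).1 hcode
      rw [Encodable.encodek, Option.mem_some_iff] at hdecode
      exact hdecode ▸ hy

theorem rePred_graph {f : α →. β} (hf : Partrec f) : REPred fun p : α × β => p.2 ∈ f p.1 := by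
  classical
  have heq : Computable₂ fun (p : α × β) (y : β) => if p.2 = y then some () else none :=
    (Primrec.ite (Primrec.eq.comp (Primrec.snd.comp Primrec.fst) Primrec.snd)
      (Primrec.const (some ())) (Primrec.const none)).to_comp
  refine ((hf.comp Computable.fst).bind heq.ofOption.to₂).dom_re.of_eq fun p => ?_
  simp [Part.dom_iff_mem]

theorem exists_partrec_isUniformization {R : α → β → Prop}
    (hR : REPred fun p : α × β => R p.1 p.2) :
    ∃ g : α →. β, Partrec g ∧ IsUniformization R g := by
  obtain ⟨F, hF, mem_F⟩ := exists_primrec₂_stages hR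
  have rel_iff (a : α) (b : β) : R a b ↔ ∃ k, () ∈ F (a, b) k := by
    simpa using mem_F (a, b) ()
  -- Dovetailing: a step codes both a stage of the semidecision and a candidate value.
  let search (a : α) (n : ℕ) : Option β :=
    (Encodable.decode n : Option (ℕ × β)).bind fun q => (F (a, q.2) q.1).map fun _ => q.2
  have mem_search {a : α} {n : ℕ} {b : β} (hb : b ∈ search a n) : R a b := by
    obtain ⟨⟨k, x⟩, -, hx⟩ := Option.mem_bind_iff.1 hb
    obtain ⟨⟨⟩, hk, rfl⟩ := Option.mem_map.1 hx
    exact (rel_iff a x).2 ⟨k, hk⟩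
  have search_primrec : Primrec₂ search := by
    have hstage : Primrec₂ fun (p : α × ℕ) (q : ℕ × β) => F (p.1, q.2) q.1 :=
      hF.comp ((Primrec.fst.comp Primrec.fst).pair (Primrec.snd.comp Primrec.snd))
        (Primrec.fst.comp Primrec.snd)
    exact Primrec.option_bind (Primrec.decode.comp Primrec.snd)
      (Primrec.option_map hstage (Primrec.snd.comp (Primrec.snd.comp Primrec.fst)).to₂)
  refine ⟨fun a => Nat.rfindOpt (search a), Partrec.rfindOpt search_primrec.to_comp, ?_, ?_⟩
  · intro a b hb
    obtain ⟨n, hn⟩ := Nat.rfindOpt_spec hb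
    exact mem_search hn
  · intro a b hab
    obtain ⟨k, hk⟩ := (rel_iff a b).1 hab
    exact Nat.rfindOpt_dom.2 ⟨Encodable.encode (k, b), b, Option.mem_bind_iff.2
      ⟨(k, b), Encodable.encodek _, Option.mem_map.2 ⟨(), hk, rfl⟩⟩⟩

theorem partrec_middle_inverse_general {f : α →. β} (hf : Partrec f) :
    ∃ g : β →. α, Partrec g ∧ ∀ a, ((f a).bind fun b => (g b).bind f) = f a := by
  have hgraph : REPred fun p : β × α => p.1 ∈ f p.2 :=
    Partrec.comp (rePred_graph hf) (Computable.snd.pair Computable.fst)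
  obtain ⟨g, hg, hgf⟩ := exists_partrec_isUniformization (R := fun b a => b ∈ f a) hgraph
  exact ⟨g, hg, hgf.bind_bind_eq⟩

/-- For every partial recursive function `f : ℕ →. ℕ` there exists a partial
recursive function `g : ℕ →. ℕ` that is a middle inverse of `f`:
the composite partial map `f ∘ g ∘ f` equals `f`. -/
theorem partrec_middle_inverse (f : ℕ →. ℕ) (hf : Nat.Partrec f) :
    ∃ g : ℕ →. ℕ, Nat.Partrec g ∧
      ∀ a : ℕ, (f a).bind (fun b => (g b).bind f) = f a := by
  simpa only [Partrec.nat_iff] using partrec_middle_inverse_general (Partrec.nat_iff.2 hf)
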